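/- Fix 1 ≤ p ≤ ∞ and integers d ≥ 1 and 1 ≤ k ≤ d with d = 2 or k = 1. Then H^p(𝕋^d) enjoys the contractive restriction property of dimension k if and only if p ≠ 2. -/

import Mathlib

open MeasureTheory
open scoped Classical ENNReal

noncomputable section

/-- The `d`-dimensional torus, modelled as `d` copies of `ℝ/ℤ`,
whose product `volume` measure is the normalized Haar measure. -/
abbrev Torus (d : ℕ) := Fin d → AddCircle (1 : ℝ)

/-- The character `z ↦ z^α` on the torus. -/
def torusChar {d : ℕ} (α : Fin d → ℤ) (x : Torus d) : ℂ :=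
  ∏ j, fourier (α j) (x j)

/-- The trigonometric polynomial with frequencies in `F` and coefficients `a`. -/
def trigPoly {d : ℕ} (F : Finset (Fin d → ℤ)) (a : (Fin d → ℤ) → ℂ) (x : Torus d) : ℂ :=
  ∑ α ∈ F, a α * torusChar α x

/-- The set `ℕ₀^d` of multi-indices with nonnegative entries. -/
def NN (d : ℕ) : Set (Fin d → ℤ) := {α | ∀ j, 0 ≤ α j}

/-- `Λ` is a coset in `ℤ^d`, i.e. a translate of a subgroup. -/
def IsCoset {d : ℕ} (Λ : Set (Fin d → ℤ)) : Prop :=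
  ∃ (x : Fin d → ℤ) (H : AddSubgroup (Fin d → ℤ)),
    Λ = (x + ·) '' (H : Set (Fin d → ℤ))

/-- `Λ` is a contractive projection set for `L^p(𝕋^d)`:
the projection onto frequencies in `Λ` is contractive on trigonometric polynomials. -/
def IsContractiveLp (d : ℕ) (p : ℝ≥0∞) (Λ : Set (Fin d → ℤ)) : Prop :=
  ∀ (F : Finset (Fin d → ℤ)) (a : (Fin d → ℤ) → ℂ),
    eLpNorm (trigPoly (F.filter (· ∈ Λ)) a) p volume ≤ eLpNorm (trigPoly F a) p volume

/-- `Γ` is a contractive projection set for `H^p(𝕋^d)`: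
the projection onto frequencies in `Γ` is contractive on analytic polynomials. -/
def IsContractiveHp (d : ℕ) (p : ℝ≥0∞) (Γ : Set (Fin d → ℤ)) : Prop :=
  ∀ F : Finset (Fin d → ℤ), ↑F ⊆ NN d → ∀ a : (Fin d → ℤ) → ℂ,
    eLpNorm (trigPoly (F.filter (· ∈ Γ)) a) p volume ≤ eLpNorm (trigPoly F a) p volume

/-- `Γ` has dimension `k`: the subgroup generated by the differences `γ - γ₀` has rank `k`. -/
def HasDim {d : ℕ} (Γ : Set (Fin d → ℤ)) (k : ℕ) : Prop :=
  ∀ γ₀ ∈ Γ, Module.finrank ℤ (Submodule.span ℤ ((· - γ₀) '' Γ)) = k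

/-- `H^p(𝕋^d)` enjoys the contractive restriction property of dimension `k`:
every `k`-dimensional contractive projection set for `H^p(𝕋^d)` is the restriction
of a coset in `ℤ^d` to `ℕ₀^d`. -/
def ContractiveRestrictionProperty (d : ℕ) (p : ℝ≥0∞) (k : ℕ) : Prop :=
  ∀ Γ : Set (Fin d → ℤ), Γ.Nonempty → Γ ⊆ NN d → HasDim Γ k → IsContractiveHp d p Γ →
    ∃ Λ : Set (Fin d → ℤ), IsCoset Λ ∧ Γ = Λ ∩ NN d

/-- The coset `Λ(Γ)` in `ℤ^d` generated by `Γ`. -/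
def cosetGen {d : ℕ} (Γ : Set (Fin d → ℤ)) : Set (Fin d → ℤ) :=
  ⋃ γ₀ ∈ Γ, (γ₀ + ·) '' (AddSubgroup.closure ((· - γ₀) '' Γ) : Set (Fin d → ℤ))

/-- The `n`-extension `E_n(Γ)`: all points of `Λ(Γ) ∩ ℕ₀^d` at distance at most `n` from `Γ`. -/
def Eext {d : ℕ} (n : ℕ) (Γ : Set (Fin d → ℤ)) : Set (Fin d → ℤ) :=
  {lam | lam ∈ cosetGen Γ ∩ NN d ∧ ∃ γ ∈ Γ, ∃ m : (Fin d → ℤ) →₀ ℤ,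
    (↑m.support : Set (Fin d → ℤ)) ⊆ Γ \ {γ} ∧
    lam = γ + ∑ α ∈ m.support, m α • (α - γ) ∧
    (∑ α ∈ m.support, max (m α) 0) ≤ (n : ℤ) ∧
    (∑ α ∈ m.support, max (-(m α)) 0) ≤ (n : ℤ)}

/-- Iterated `n`-extensions `E_n^k(Γ)`. -/
def EextIter {d : ℕ} (n : ℕ) : ℕ → Set (Fin d → ℤ) → Set (Fin d → ℤ)
  | 0, Γ => Eext n Γ
  | (k + 1), Γ => Eext n (EextIter n k Γ)

/-- The `n`-completion `E_n^∞(Γ)`. -/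
def EextInf {d : ℕ} (n : ℕ) (Γ : Set (Fin d → ℤ)) : Set (Fin d → ℤ) :=
  ⋃ k, EextIter n k Γ

/-- Closedness under the partial operation `a + c - b`. -/
def ClosedE {d : ℕ} (S : Set (Fin d → ℤ)) : Prop :=
  ∀ a ∈ S, ∀ b ∈ S, ∀ c ∈ S, a + c - b ∈ NN d → a + c - b ∈ S

lemma ClosedE.add_nsmul {d : ℕ} {S : Set (Fin d → ℤ)} (hS : ClosedE S) (hN : S ⊆ NN d)
    {a b : Fin d → ℤ} (ha : a ∈ S) (hb : b ∈ S) {s : Fin d → ℤ} (hs : s ∈ S) :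
    ∀ n : ℕ, s + (n : ℤ) • (a - b) ∈ NN d → s + (n : ℤ) • (a - b) ∈ S := by
  intro n
  induction n with
  | zero => intro _; simpa using hs
  | succ n ih =>
    intro h
    have h1 : s + (n : ℤ) • (a - b) ∈ NN d := by
      intro j
      have h2 := h j
      have h3 := hN hs j
      simp only [Pi.add_apply, Pi.smul_apply, Pi.sub_apply, smul_eq_mul] at h2 ⊢
      push_cast at h2
      rcases le_total 0 (a j - b j) with h4 | h4
      · positivity
      · nlinarith
    have h2 := hS _ (ih h1) b hb a ha
    have e : s + (n : ℤ) • (a - b) + a - b = s + ((n + 1 : ℕ) : ℤ) • (a - b) := by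
      push_cast; module
    rw [e] at h2
    exact h2 h

lemma ClosedE.add_zsmul {d : ℕ} {S : Set (Fin d → ℤ)} (hS : ClosedE S) (hN : S ⊆ NN d)
    {a b : Fin d → ℤ} (ha : a ∈ S) (hb : b ∈ S) {s : Fin d → ℤ} (hs : s ∈ S)
    (n : ℤ) (h : s + n • (a - b) ∈ NN d) : s + n • (a - b) ∈ S := by
  obtain ⟨m, rfl | rfl⟩ := n.eq_nat_or_neg
  · exact hS.add_nsmul hN ha hb hs m h
  · have e : s + (-(m : ℤ)) • (a - b) = s + (m : ℤ) • (b - a) := by module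
    rw [e] at h ⊢
    exact hS.add_nsmul hN hb ha hs m h

/-- One-dimensional case. -/
lemma ClosedE.line {d : ℕ} {S : Set (Fin d → ℤ)} (hS : ClosedE S) (hN : S ⊆ NN d)
    (γ v : Fin d → ℤ) (hγ : γ ∈ S) (hv : ∀ s ∈ S, ∃ t : ℤ, s = γ + t • v) :
    ∃ Λ : Set (Fin d → ℤ), IsCoset Λ ∧ S = Λ ∩ NN d := by
  by_cases hsub : ∀ s ∈ S, s = γ
  · refine ⟨{γ}, ⟨γ, ⊥, by simp⟩, ?_⟩
    ext s
    constructor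
    · intro hs; exact ⟨hsub s hs, hN hs⟩
    · rintro ⟨rfl, _⟩; exact hγ
  · have hex : ∃ n : ℕ, 0 < n ∧ ∃ t : ℤ, γ + t • v ∈ S ∧ γ + (t + n) • v ∈ S := by
      push Not at hsub
      obtain ⟨s, hs, hne⟩ := hsub
      obtain ⟨t, rfl⟩ := hv s hs
      have ht : t ≠ 0 := by rintro rfl; simp at hne
      rcases lt_or_gt_of_ne ht with h | h
      · exact ⟨t.natAbs, by omega, t, hs, by
          have : t + (t.natAbs : ℤ) = 0 := by omega
          rw [this]; simpa using hγ⟩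
      · exact ⟨t.natAbs, by omega, 0, by simpa using hγ, by
          have : 0 + (t.natAbs : ℤ) = t := by omega
          rw [this]; exact hs⟩
    set g := Nat.find hex with hg
    obtain ⟨hg0, t0, ht0, ht1⟩ := Nat.find_spec hex
    rw [← hg] at hg0 ht1
    have hmin : ∀ n : ℕ, 0 < n → ∀ t : ℤ, γ + t • v ∈ S → γ + (t + n) • v ∈ S → g ≤ n :=
      fun n h1 t h2 h3 => Nat.find_min' hex ⟨h1, t, h2, h3⟩
    have hw : γ + (t0 + (g : ℤ)) • v - (γ + t0 • v) = (g : ℤ) • v := by module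
    have hdvd : ∀ n : ℕ, ∀ t : ℤ, γ + t • v ∈ S → γ + (t + n) • v ∈ S → g ∣ n := by
      intro n
      induction n using Nat.strong_induction_on with
      | _ n ih =>
        intro t h1 h2
        rcases Nat.eq_zero_or_pos n with rfl | hn
        · simp
        · have hle := hmin n hn t h1 h2
          obtain ⟨m, rfl⟩ := Nat.exists_eq_add_of_le hle
          have h3 := hS.add_zsmul hN ht1 ht0 h2 (-1)
          rw [hw] at h3
          have e : γ + (t + ((g + m : ℕ) : ℤ)) • v + (-1 : ℤ) • (g : ℤ) • v
            = γ + (t + (m : ℤ)) • v := by push_cast; module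
          rw [e] at h3
          have h4 : γ + (t + (m : ℤ)) • v ∈ NN d := by
            intro j
            have a1 := hN h1 j
            have a2 := hN h2 j
            simp only [Pi.add_apply, Pi.smul_apply, smul_eq_mul] at a1 a2 ⊢
            push_cast at a2
            have m0 : (0 : ℤ) ≤ m := by positivity
            have g0 : (0 : ℤ) ≤ g := by positivity
            rcases le_total 0 (v j) with h | h
            · nlinarith [mul_nonneg m0 h]
            · nlinarith [mul_nonneg g0 (neg_nonneg.2 h)]
          have := ih m (by omega) t h1 (h3 h4)
          exact (Nat.dvd_add_right (dvd_refl g)).2 this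
    refine ⟨_, ⟨γ, AddSubgroup.zmultiples ((g : ℤ) • v), rfl⟩, ?_⟩
    ext s
    constructor
    · intro hs
      refine ⟨?_, hN hs⟩
      obtain ⟨t, rfl⟩ := hv s hs
      have : (g : ℤ) ∣ t := by
        rcases le_total 0 t with h | h
        · have := hdvd t.natAbs 0 (by simpa using hγ) (by
            have : 0 + (t.natAbs : ℤ) = t := by omega
            rw [this]; exact hs)
          exact Int.natCast_dvd.2 this
        · have := hdvd t.natAbs t hs (by
            have : t + (t.natAbs : ℤ) = 0 := by omega
            rw [this]; simpa using hγ)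
          exact Int.natCast_dvd.2 this
      obtain ⟨m, rfl⟩ := this
      refine ⟨m • (g : ℤ) • v, ⟨m, rfl⟩, ?_⟩
      simp only; module
    · rintro ⟨⟨_, ⟨m, rfl⟩, rfl⟩, h2⟩
      have := hS.add_zsmul hN ht1 ht0 hγ m
      rw [hw] at this
      exact this h2

lemma finrank_span_le_one {d : ℕ} (T : Set (Fin d → ℤ)) (v : Fin d → ℤ)
    (h : ∀ s ∈ T, ∃ t : ℤ, s = t • v) : Module.finrank ℤ (Submodule.span ℤ T) ≤ 1 := by
  have h1 : Submodule.span ℤ T ≤ Submodule.span ℤ {v} := by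
    rw [Submodule.span_le]
    intro s hs
    obtain ⟨t, rfl⟩ := h s hs
    exact Submodule.smul_mem _ _ (Submodule.mem_span_singleton_self v)
  refine (Submodule.finrank_mono h1).trans ?_
  have := finrank_span_le_card (R := ℤ) ({v} : Set (Fin d → ℤ))
  simpa using this

lemma ClosedE.one {d : ℕ} {S : Set (Fin d → ℤ)} (hS : ClosedE S) (hN : S ⊆ NN d)
    (hne : S.Nonempty) (hdim : HasDim S 1) :
    ∃ Λ : Set (Fin d → ℤ), IsCoset Λ ∧ S = Λ ∩ NN d := by
  obtain ⟨γ, hγ⟩ := hne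
  have h1 := hdim γ hγ
  obtain ⟨v, hv⟩ := finrank_eq_one_iff'.1 h1 |>.imp fun v hv => hv.2
  refine hS.line hN γ v hγ ?_
  intro s hs
  obtain ⟨t, ht⟩ := hv ⟨s - γ, Submodule.subset_span ⟨s, hs, rfl⟩⟩
  refine ⟨t, ?_⟩
  have := congrArg Subtype.val ht
  simp only [Submodule.coe_smul] at this
  rw [this]; abel

/-- The two-dimensional case in the plane. -/
lemma ClosedE.unbounded_imp {d : ℕ} {S : Set (Fin d → ℤ)} (hS : ClosedE S) (hN : S ⊆ NN d)
    (hne : S.Nonempty) (hub : ∀ N : ℤ, ∃ s ∈ S, ∀ j, N ≤ s j) :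
    ∃ Λ : Set (Fin d → ℤ), IsCoset Λ ∧ S = Λ ∩ NN d := by
  obtain ⟨γ, hγ⟩ := hne
  let H : AddSubgroup (Fin d → ℤ) :=
    { carrier := {v | ∃ a ∈ S, ∃ b ∈ S, v = a - b}
      zero_mem' := ⟨γ, hγ, γ, hγ, by simp⟩
      neg_mem' := by
        rintro _ ⟨a, ha, b, hb, rfl⟩
        exact ⟨b, hb, a, ha, by abel⟩
      add_mem' := by
        rintro _ _ ⟨a, ha, b, hb, rfl⟩ ⟨a', ha', b', hb', rfl⟩
        obtain ⟨s, hs, hsN⟩ := hub (∑ j, (|b j| + |b' j|))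
        have key : ∀ j, |b j| + |b' j| ≤ s j := fun j =>
          (Finset.single_le_sum (f := fun j => |b j| + |b' j|)
            (fun i _ => by positivity) (Finset.mem_univ j)).trans (hsN j)
        have h1 : s + a - b ∈ S := by
          refine hS s hs b hb a ha ?_
          intro j
          have := key j
          have := hN ha j
          simp only [Pi.add_apply, Pi.sub_apply]
          have := le_abs_self (b j)
          have := abs_nonneg (b' j)
          linarith
        have h2 : (s + a - b) + a' - b' ∈ S := by
          refine hS _ h1 b' hb' a' ha' ?_
          intro j
          have := key j
          have := hN ha j
          have := hN ha' j
          simp only [Pi.add_apply, Pi.sub_apply]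
          have := le_abs_self (b j)
          have := le_abs_self (b' j)
          linarith
        exact ⟨_, h2, s, hs, by abel⟩ }
  refine ⟨_, ⟨γ, H, rfl⟩, ?_⟩
  ext s
  constructor
  · intro hs
    exact ⟨⟨s - γ, ⟨s, hs, γ, hγ, rfl⟩, by simp⟩, hN hs⟩
  · rintro ⟨⟨_, ⟨a, ha, b, hb, rfl⟩, rfl⟩, h⟩
    have e : γ + (a - b) = γ + a - b := by abel
    simp only [e] at h ⊢
    exact hS γ hγ b hb a ha h

lemma ClosedE.two_aux {S : Set (Fin 2 → ℤ)} (hS : ClosedE S) (hN : S ⊆ NN 2)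
    (hdim : HasDim S 2) {i j : Fin 2} (hij : i ≠ j) {a b : Fin 2 → ℤ} (ha : a ∈ S) (hb : b ∈ S)
    (hi : b i < a i) (hj : b j ≤ a j) : ∀ N : ℤ, ∃ s ∈ S, ∀ l, N ≤ s l := by
  have hcov : ∀ P : Fin 2 → Prop, P i → P j → ∀ l, P l := by
    intro P h1 h2 l
    fin_cases i <;> fin_cases j <;> fin_cases l <;> simp_all
  have hex : ∃ c ∈ S, ∃ e ∈ S, e j < c j := by
    by_contra! hcon
    have h1 := hdim b hb
    have h2 := finrank_span_le_one ((· - b) '' S) (Pi.single i 1) (by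
      rintro _ ⟨s, hs, rfl⟩
      refine ⟨s i - b i, ?_⟩
      have h3 : s j = b j := le_antisymm (hcon s hs b hb) (hcon b hb s hs)
      funext l
      revert l
      refine hcov _ ?_ ?_
      · simp
      · simp [h3, hij.symm])
    omega
  obtain ⟨c, hc, e, he, hce⟩ := hex
  intro N
  set M : ℕ := N.toNat with hM
  set K : ℕ := (N + M * |c i - e i|).toNat with hK
  have hMN : N ≤ M := Int.self_le_toNat N
  have hKN : N + M * |c i - e i| ≤ K := Int.self_le_toNat _
  have h1 : b + (K : ℤ) • (a - b) ∈ S := by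
    refine hS.add_nsmul hN ha hb hb K ?_
    refine hcov _ ?_ ?_
    · have := hN hb i
      simp only [Pi.add_apply, Pi.smul_apply, Pi.sub_apply, smul_eq_mul]
      have : 0 ≤ (K : ℤ) * (a i - b i) := mul_nonneg (by positivity) (by omega)
      omega
    · have := hN hb j
      simp only [Pi.add_apply, Pi.smul_apply, Pi.sub_apply, smul_eq_mul]
      have : 0 ≤ (K : ℤ) * (a j - b j) := mul_nonneg (by positivity) (by omega)
      omega
  have hbig : ∀ l, max N 0 ≤ (b + (K : ℤ) • (a - b) + (M : ℤ) • (c - e)) l := by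
    refine hcov _ ?_ ?_
    · have h0 := hN hb i
      simp only [Pi.add_apply, Pi.smul_apply, Pi.sub_apply, smul_eq_mul]
      have h2 : (K : ℤ) * 1 ≤ (K : ℤ) * (a i - b i) :=
        mul_le_mul_of_nonneg_left (by omega) (by positivity)
      have h3 : (M : ℤ) * (-|c i - e i|) ≤ (M : ℤ) * (c i - e i) :=
        mul_le_mul_of_nonneg_left (neg_abs_le _) (by positivity)
      have h4 : 0 ≤ (K : ℤ) - (M : ℤ) * |c i - e i| := by
        have : 0 ≤ (M : ℤ) * |c i - e i| := by positivity
        rcases le_total 0 N with h | h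
        · linarith
        · have : M = 0 := by omega
          simp [this]
      refine max_le ?_ ?_ <;> linarith
    · have h0 := hN hb j
      simp only [Pi.add_apply, Pi.smul_apply, Pi.sub_apply, smul_eq_mul]
      have h2 : 0 ≤ (K : ℤ) * (a j - b j) := mul_nonneg (by positivity) (by omega)
      have h3 : (M : ℤ) * 1 ≤ (M : ℤ) * (c j - e j) :=
        mul_le_mul_of_nonneg_left (by omega) (by positivity)
      refine max_le ?_ ?_ <;> linarith
  refine ⟨_, hS.add_nsmul hN hc he h1 M ?_, fun l => (le_max_left _ _).trans (hbig l)⟩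
  exact fun l => (le_max_right _ _).trans (hbig l)

lemma ClosedE.two {S : Set (Fin 2 → ℤ)} (hS : ClosedE S) (hN : S ⊆ NN 2)
    (hne : S.Nonempty) (hdim : HasDim S 2) :
    ∃ Λ : Set (Fin 2 → ℤ), IsCoset Λ ∧ S = Λ ∩ NN 2 := by
  by_cases h0 : ∃ a ∈ S, ∃ b ∈ S, b 0 < a 0 ∧ b 1 ≤ a 1
  · obtain ⟨a, ha, b, hb, h1, h2⟩ := h0
    exact hS.unbounded_imp hN hne (hS.two_aux hN hdim (by decide : (0 : Fin 2) ≠ 1) ha hb h1 h2)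
  by_cases h0' : ∃ a ∈ S, ∃ b ∈ S, b 1 < a 1 ∧ b 0 ≤ a 0
  · obtain ⟨a, ha, b, hb, h1, h2⟩ := h0'
    exact hS.unbounded_imp hN hne (hS.two_aux hN hdim (by decide : (1 : Fin 2) ≠ 0) ha hb h1 h2)
  exfalso
  push Not at h0 h0'
  have hinj : ∀ a ∈ S, ∀ b ∈ S, a 0 = b 0 → a = b := by
    intro a ha b hb h
    have h1 : a 1 = b 1 := by
      by_contra hc
      rcases lt_or_gt_of_ne hc with hc | hc
      · have := h0' b hb a ha hc; omega
      · have := h0' a ha b hb hc; omega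
    funext l; fin_cases l <;> assumption
  have hmin : ∀ T : Set (Fin 2 → ℤ), T ⊆ S → T.Nonempty → ∃ s ∈ T, ∀ t ∈ T, s 0 ≤ t 0 := by
    rintro T hT ⟨t, ht⟩
    have hex : ∃ n : ℕ, ∃ s ∈ T, s 0 = n :=
      ⟨(t 0).toNat, t, ht, by have := hN (hT ht) 0; omega⟩
    obtain ⟨s, hs, hsn⟩ := Nat.find_spec hex
    refine ⟨s, hs, fun u hu => ?_⟩
    have := Nat.find_min' hex ⟨u, hu, (Int.toNat_of_nonneg (hN (hT hu) 0)).symm⟩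
    have := hN (hT hu) 0
    omega
  obtain ⟨s, hs, hsmin⟩ := hmin S subset_rfl hne
  have hT : (S \ {s}).Nonempty := by
    by_contra hc
    rw [Set.not_nonempty_iff_eq_empty, Set.sdiff_eq_empty] at hc
    have h1 := hdim s hs
    have h2 := finrank_span_le_one ((· - s) '' S) 0 (by
      rintro _ ⟨u, hu, rfl⟩
      refine ⟨0, ?_⟩
      have := hc hu
      simp only [Set.mem_singleton_iff] at this
      simp [this])
    omega
  obtain ⟨t, ⟨ht, hts⟩, htmin⟩ := hmin (S \ {s}) Set.sdiff_subset hT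
  have hst : s 0 < t 0 :=
    lt_of_le_of_ne (hsmin t ht) fun h => hts (hinj _ ht _ hs h.symm)
  have hst1 : t 1 < s 1 := h0 t ht s hs hst
  have key : ∀ n : ℕ, ∀ u ∈ S, u 0 = n → ∃ m : ℤ, u - s = m • (t - s) := by
    intro n
    induction n using Nat.strong_induction_on with
    | _ n ih =>
      intro u hu hun
      by_cases hus : u = s
      · exact ⟨0, by simp [hus]⟩
      have hle := htmin u ⟨hu, hus⟩
      have h1 : u + s - t ∈ S := by
        refine hS u hu t ht s hs ?_
        intro l
        have a0 := hN hu 0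
        have a1 := hN hu 1
        have a2 := hN hs 0
        fin_cases l
        · simp; omega
        · simp; omega
      have h2 := hN h1 0
      have h3 : (u + s - t) 0 = u 0 + s 0 - t 0 := rfl
      obtain ⟨m, hm⟩ := ih ((u + s - t) 0).toNat (by omega) _ h1 (by omega)
      refine ⟨m + 1, ?_⟩
      rw [add_smul, ← hm]; module
  have h1 := hdim s hs
  have h2 := finrank_span_le_one ((· - s) '' S) (t - s) (by
    rintro _ ⟨u, hu, rfl⟩
    exact key (u 0).toNat u hu (by have := hN hu 0; omega))
  omega

lemma ring_choose_two (q : ℝ) : Ring.choose q 2 = q * (q - 1) / 2 := by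
  have h := Ring.descPochhammer_eq_factorial_smul_choose q 2
  simp [descPochhammer, Polynomial.smeval_X, Polynomial.smeval_mul, Polynomial.smeval_sub] at h
  linarith

lemma taylor_rpow (q : ℝ) : ∃ C > 0, ∃ δ > 0, ∀ y : ℝ, |y| < δ →
    |(1 + y) ^ q - (1 + q * y + q * (q - 1) / 2 * y ^ 2)| ≤ C * |y| ^ 3 := by
  have h := (Real.one_add_rpow_hasFPowerSeriesAt_zero (a := q)).isBigO_sub_partialSum_pow 3
  obtain ⟨C, hC, h⟩ := h.exists_pos
  rw [Asymptotics.IsBigOWith, Metric.eventually_nhds_iff] at h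
  obtain ⟨δ, hδ, h⟩ := h
  refine ⟨C, hC, δ, hδ, fun y hy => ?_⟩
  have := h (y := y) (by simpa using hy)
  simp only [FormalMultilinearSeries.partialSum, Finset.sum_range_succ, binomialSeries_apply,
    Finset.range_zero, Finset.sum_empty, Ring.choose_zero_right, Ring.choose_one_right,
    ring_choose_two, zero_add, Real.norm_eq_abs, abs_pow, abs_abs] at this
  simp at this
  convert this using 3
  ring

lemma four_point (q Z : ℝ) (hZ : 0 < Z) : ∃ C > 0, ∃ δ > 0, ∀ η : ℝ, 0 < η → η < δ →
    ∀ z : ℂ, ‖z‖ ≤ Z →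
    |‖1 + η * z‖ ^ (2 * q) + ‖1 + η * (Complex.I * z)‖ ^ (2 * q) + ‖1 + η * (-z)‖ ^ (2 * q)
      + ‖1 + η * (-(Complex.I * z))‖ ^ (2 * q) - 4 * (1 + q ^ 2 * η ^ 2 * ‖z‖ ^ 2)| ≤ C * η ^ 3 := by
  obtain ⟨C, hC, δ, hδ, h⟩ := taylor_rpow q
  set L := 2 * Z + Z ^ 2 with hL
  have hLp : 0 < L := by positivity
  refine ⟨4 * C * L ^ 3 + 2 * |q * (q - 1)| * Z ^ 4 + 1, by positivity, min 1 (δ / L), by positivity,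
    fun η hη hη2 z hz => ?_⟩
  have hη1 : η < 1 := hη2.trans_le (min_le_left _ _)
  have hηδ : η * L < δ := by
    rw [← lt_div_iff₀ hLp]; exact hη2.trans_le (min_le_right _ _)
  have key : ∀ w : ℂ, ‖w‖ ≤ Z → |‖1 + η * w‖ ^ (2 * q) -
      (1 + q * (2 * η * w.re + η ^ 2 * ‖w‖ ^ 2)
        + q * (q - 1) / 2 * (2 * η * w.re + η ^ 2 * ‖w‖ ^ 2) ^ 2)| ≤ C * L ^ 3 * η ^ 3 := by
    intro w hw
    set y := 2 * η * w.re + η ^ 2 * ‖w‖ ^ 2 with hy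
    have e1 : ‖1 + η * w‖ ^ 2 = 1 + y := by
      rw [hy, ← Complex.normSq_eq_norm_sq, ← Complex.normSq_eq_norm_sq]
      simp [Complex.normSq_apply]; ring
    have e2 : ‖1 + η * w‖ ^ (2 * q) = (1 + y) ^ q := by
      rw [Real.rpow_mul (norm_nonneg _), ← e1]; norm_num
    have hyb : |y| ≤ η * L := by
      have h1 : |w.re| ≤ Z := (Complex.abs_re_le_norm w).trans hw
      have h2 : ‖w‖ ^ 2 ≤ Z ^ 2 := by gcongr
      calc |y| ≤ |2 * η * w.re| + |η ^ 2 * ‖w‖ ^ 2| := abs_add_le _ _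
        _ = 2 * η * |w.re| + η * η * ‖w‖ ^ 2 := by
            rw [abs_mul, abs_of_pos (by positivity : 0 < 2 * η),
              abs_of_nonneg (by positivity : 0 ≤ η ^ 2 * ‖w‖ ^ 2)]; ring
        _ ≤ 2 * η * Z + η * 1 * Z ^ 2 := by gcongr
        _ = η * L := by rw [hL]; ring
    rw [e2]
    refine (h y (hyb.trans_lt hηδ)).trans ?_
    calc C * |y| ^ 3 ≤ C * (η * L) ^ 3 := by gcongr
      _ = _ := by ring
  have k1 := key z hz
  have k2 := key (Complex.I * z) (by simpa using hz)
  have k3 := key (-z) (by simpa using hz)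
  have k4 := key (-(Complex.I * z)) (by simpa using hz)
  have hn : ‖z‖ ^ 2 = z.re ^ 2 + z.im ^ 2 := by
    rw [← Complex.normSq_eq_norm_sq, Complex.normSq_apply]; ring
  have hr : |2 * (q * (q - 1)) * η ^ 4 * ‖z‖ ^ 4| ≤ 2 * |q * (q - 1)| * Z ^ 4 * η ^ 3 := by
    rw [abs_mul, abs_mul, abs_mul, abs_of_pos (by norm_num : (0 : ℝ) < 2),
      abs_of_pos (by positivity : 0 < η ^ 4), abs_of_nonneg (by positivity : 0 ≤ ‖z‖ ^ 4)]
    calc 2 * |q * (q - 1)| * η ^ 4 * ‖z‖ ^ 4 = 2 * |q * (q - 1)| * (η ^ 3 * η) * ‖z‖ ^ 4 := by ring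
      _ ≤ 2 * |q * (q - 1)| * (η ^ 3 * 1) * Z ^ 4 := by gcongr
      _ = _ := by ring
  simp only [norm_mul, norm_neg, Complex.norm_I, one_mul, Complex.neg_re, Complex.mul_re,
    Complex.I_re, Complex.I_im, zero_mul, zero_sub, neg_neg] at k1 k2 k3 k4
  have e4 : ‖z‖ ^ 4 = (z.re ^ 2 + z.im ^ 2) ^ 2 := by rw [← hn]; ring
  rw [e4] at hr
  rw [hn] at k1 k2 k3 k4 ⊢
  rw [abs_le] at *
  have h3 : 0 < η ^ 3 := by positivity
  constructor <;> linarith [k1.1, k1.2, k2.1, k2.2, k3.1, k3.2, k4.1, k4.2, hr.1, hr.2]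

/-- The variational core: contractivity forces a vanishing moment. -/
lemma moment_zero {X : Type*} [TopologicalSpace X] [CompactSpace X] [MeasurableSpace X]
    [BorelSpace X] (μ : Measure X) [IsFiniteMeasure μ] (q : ℝ) (hq : 0 < q) (w₁ w₂ : X → ℂ)
    (hc₁ : Continuous w₁) (hc₂ : Continuous w₂) (hn₁ : ∀ x, ‖w₁ x‖ = 1) (hn₂ : ∀ x, ‖w₂ x‖ = 1)
    (h : ∀ a t : ℂ, ∫ x, ‖1 + 1 / 2 * w₂ x + a * w₁ x‖ ^ (2 * q) ∂μ ≤
      ∫ x, ‖1 + 1 / 2 * w₂ x + a * w₁ x + t * (w₁ x * w₂ x)‖ ^ (2 * q) ∂μ) :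
    ∫ x, ‖1 + 1 / 2 * w₂ x‖ ^ (2 * q - 2) * (w₂ x).re ∂μ = 0 := by
  have hint : ∀ f : X → ℝ, Continuous f → Integrable f μ := fun f hf =>
    hf.integrable_of_hasCompactSupport (HasCompactSupport.of_compactSpace f)
  set A : X → ℂ := fun x => 1 + 1 / 2 * w₂ x with hA
  have hcA : Continuous A := by fun_prop
  have hAlow : ∀ x, 1 / 2 ≤ ‖A x‖ := by
    intro x
    have h1 := norm_sub_norm_le (1 : ℂ) (-(1 / 2 * w₂ x))
    rw [sub_neg_eq_add] at h1
    have h2 : ‖-(1 / 2 * w₂ x)‖ = 1 / 2 := by rw [norm_neg, norm_mul, hn₂]; norm_num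
    rw [h2, norm_one] at h1
    show 1 / 2 ≤ ‖1 + 1 / 2 * w₂ x‖
    linarith
  have hA0 : ∀ x, A x ≠ 0 := fun x => by
    rw [← norm_pos_iff]; linarith [hAlow x]
  have hpow : ∀ r : ℝ, Continuous fun x => ‖A x‖ ^ r := fun r =>
    hcA.norm.rpow_const fun x => Or.inl (norm_ne_zero_iff.2 (hA0 x))
  have hcq : ∀ f : X → ℂ, Continuous f → Continuous fun x => ‖f x‖ ^ (2 * q) := fun f hf =>
    hf.norm.rpow_const fun x => Or.inr (by positivity)
  set I0 := ∫ x, ‖A x‖ ^ (2 * q - 2) ∂μ with hI0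
  set I1 := ∫ x, ‖A x‖ ^ (2 * q - 2) * (w₂ x).re ∂μ with hI1
  set I2 := ∫ x, ‖A x‖ ^ (2 * q) ∂μ with hI2
  obtain ⟨C, hC, δ, hδ, H⟩ := four_point q 4 (by norm_num)
  have hmain : ∀ τ : ℝ, |τ| ≤ 1 → 0 ≤ 2 * τ * I1 + τ ^ 2 * I0 := by
    intro τ hτ
    have hstep : ∀ η : ℝ, 0 < η → η < δ →
        0 ≤ 4 * q ^ 2 * (2 * τ * I1 + τ ^ 2 * I0) + 2 * C * I2 * η := by
      intro η hη hηδ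
      set B : X → ℂ := fun x => w₁ x * (1 + τ * w₂ x) with hB
      have hcB : Continuous B := by fun_prop
      have hBn : ∀ x, ‖B x‖ ^ 2 = 1 + 2 * τ * (w₂ x).re + τ ^ 2 := by
        intro x
        have h1 : (w₂ x).re ^ 2 + (w₂ x).im ^ 2 = 1 := by
          have := hn₂ x
          have h2 := Complex.normSq_eq_norm_sq (w₂ x)
          rw [this, Complex.normSq_apply] at h2; nlinarith
        rw [hB]
        simp only [norm_mul, hn₁, one_mul]
        rw [← Complex.normSq_eq_norm_sq, Complex.normSq_apply]
        simp
        linear_combination τ ^ 2 * h1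
      have hBle : ∀ x, ‖B x‖ ≤ 2 := by
        intro x
        rw [hB]; simp only [norm_mul, hn₁, one_mul]
        calc ‖1 + (τ : ℂ) * w₂ x‖ ≤ ‖(1 : ℂ)‖ + ‖(τ : ℂ) * w₂ x‖ := norm_add_le _ _
          _ = 1 + |τ| := by rw [norm_mul, hn₂]; simp
          _ ≤ 2 := by linarith
      -- four point sums
      let S : (X → ℂ) → X → ℝ := fun V x =>
        ‖A x + η * V x‖ ^ (2 * q) + ‖A x + η * (Complex.I * V x)‖ ^ (2 * q)
          + ‖A x + η * (-V x)‖ ^ (2 * q) + ‖A x + η * (-(Complex.I * V x))‖ ^ (2 * q)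
      have hSest : ∀ V : X → ℂ, ∀ x, ‖V x‖ ≤ 2 →
          |S V x - 4 * (‖A x‖ ^ (2 * q) + q ^ 2 * η ^ 2 * (‖A x‖ ^ (2 * q - 2) * ‖V x‖ ^ 2))|
            ≤ C * η ^ 3 * ‖A x‖ ^ (2 * q) := by
        intro V x hV
        have hpos : 0 < ‖A x‖ := norm_pos_iff.2 (hA0 x)
        have hz : ‖V x / A x‖ ≤ 4 := by
          rw [norm_div, div_le_iff₀ hpos]
          linarith [hAlow x]
        have h1 := H η hη hηδ _ hz
        have hfac : ∀ u : ℂ, ‖A x + η * u‖ ^ (2 * q)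
            = ‖A x‖ ^ (2 * q) * ‖1 + η * (u / A x)‖ ^ (2 * q) := by
          intro u
          rw [← Real.mul_rpow (norm_nonneg _) (norm_nonneg _), ← norm_mul]
          congr 2
          field_simp [hA0 x]
        have hr : ‖A x‖ ^ (2 * q - 2) * ‖V x‖ ^ 2 = ‖A x‖ ^ (2 * q) * ‖V x / A x‖ ^ 2 := by
          rw [Real.rpow_sub hpos, norm_div]
          norm_num
          field_simp
        have e : S V x - 4 * (‖A x‖ ^ (2 * q) + q ^ 2 * η ^ 2 * (‖A x‖ ^ (2 * q - 2) * ‖V x‖ ^ 2))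
          = ‖A x‖ ^ (2 * q) * (‖1 + η * (V x / A x)‖ ^ (2 * q)
            + ‖1 + η * (Complex.I * (V x / A x))‖ ^ (2 * q) + ‖1 + η * (-(V x / A x))‖ ^ (2 * q)
            + ‖1 + η * (-(Complex.I * (V x / A x)))‖ ^ (2 * q)
            - 4 * (1 + q ^ 2 * η ^ 2 * ‖V x / A x‖ ^ 2)) := by
          rw [hr]
          simp only [S]
          rw [hfac, hfac, hfac, hfac, neg_div, neg_div, mul_div_assoc]
          ring
        rw [e, abs_mul, abs_of_nonneg (by positivity)]
        calc _ ≤ ‖A x‖ ^ (2 * q) * (C * η ^ 3) := by gcongr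
          _ = _ := by ring
      have hScont : ∀ V : X → ℂ, Continuous V → Continuous (S V) := by
        intro V hV
        have c1 := hcq (fun x => A x + η * V x) (by fun_prop)
        have c2 := hcq (fun x => A x + η * (Complex.I * V x)) (by fun_prop)
        have c3 := hcq (fun x => A x + η * (-V x)) (by fun_prop)
        have c4 := hcq (fun x => A x + η * (-(Complex.I * V x))) (by fun_prop)
        exact ((c1.add c2).add c3).add c4
      have hSint : ∀ V : X → ℂ, Continuous V → ∫ x, S V x ∂μ =
          ∫ x, ‖A x + η * V x‖ ^ (2 * q) ∂μ + ∫ x, ‖A x + η * (Complex.I * V x)‖ ^ (2 * q) ∂μ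
          + ∫ x, ‖A x + η * (-V x)‖ ^ (2 * q) ∂μ
          + ∫ x, ‖A x + η * (-(Complex.I * V x))‖ ^ (2 * q) ∂μ := by
        intro V hV
        have c1 := hint _ (hcq (fun x => A x + η * V x) (by fun_prop))
        have c2 := hint _ (hcq (fun x => A x + η * (Complex.I * V x)) (by fun_prop))
        have c3 := hint _ (hcq (fun x => A x + η * (-V x)) (by fun_prop))
        have c4 := hint _ (hcq (fun x => A x + η * (-(Complex.I * V x))) (by fun_prop))
        simp only [S]
        have c12 : Integrable (fun x => ‖A x + η * V x‖ ^ (2 * q)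
          + ‖A x + η * (Complex.I * V x)‖ ^ (2 * q)) μ := c1.add c2
        have c123 : Integrable (fun x => ‖A x + η * V x‖ ^ (2 * q)
          + ‖A x + η * (Complex.I * V x)‖ ^ (2 * q) + ‖A x + η * (-V x)‖ ^ (2 * q)) μ := c12.add c3
        rw [integral_add c123 c4, integral_add c12 c3, integral_add c1 c2]
      have hcontr : ∀ ζ : ℂ, ∫ x, ‖A x + η * (ζ * w₁ x)‖ ^ (2 * q) ∂μ
          ≤ ∫ x, ‖A x + η * (ζ * B x)‖ ^ (2 * q) ∂μ := by
        intro ζ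
        have := h (η * ζ) (η * ζ * τ)
        convert this using 5 with x x
        · ring
        · simp only [hA, hB]; ring
      have hSle : ∫ x, S w₁ x ∂μ ≤ ∫ x, S B x ∂μ := by
        rw [hSint _ hc₁, hSint _ hcB]
        have h1 := hcontr 1
        have h2 := hcontr Complex.I
        have h3 := hcontr (-1)
        have h4 := hcontr (-Complex.I)
        simp only [one_mul, neg_mul] at h1 h2 h3 h4
        linarith
      have hpt : ∀ x, S B x - S w₁ x ≤ 4 * q ^ 2 * η ^ 2 * (2 * τ * (‖A x‖ ^ (2 * q - 2) * (w₂ x).re)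
          + τ ^ 2 * ‖A x‖ ^ (2 * q - 2)) + 2 * C * η ^ 3 * ‖A x‖ ^ (2 * q) := by
        intro x
        have h1 := (abs_le.1 (hSest B x (hBle x))).2
        have h2 := (abs_le.1 (hSest w₁ x (by rw [hn₁]; norm_num))).1
        rw [hBn] at h1
        rw [hn₁] at h2
        nlinarith
      have hIle : ∫ x, (S B x - S w₁ x) ∂μ ≤ ∫ x, (4 * q ^ 2 * η ^ 2 *
          (2 * τ * (‖A x‖ ^ (2 * q - 2) * (w₂ x).re)
          + τ ^ 2 * ‖A x‖ ^ (2 * q - 2)) + 2 * C * η ^ 3 * ‖A x‖ ^ (2 * q)) ∂μ := by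
        have c1 := hpow (2 * q - 2)
        have c2 := hpow (2 * q)
        refine integral_mono (hint _ ((hScont _ hcB).sub (hScont _ hc₁))) (hint _ ?_) hpt
        fun_prop
      rw [integral_sub (hint _ (hScont _ hcB)) (hint _ (hScont _ hc₁))] at hIle
      have j1 : Integrable (fun x => ‖A x‖ ^ (2 * q - 2) * (w₂ x).re) μ :=
        hint _ ((hpow _).mul (by fun_prop))
      have j0 := hint _ (hpow (2 * q - 2))
      have j2 := hint _ (hpow (2 * q))
      have j10 : Integrable (fun x => 2 * τ * (‖A x‖ ^ (2 * q - 2) * (w₂ x).re)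
          + τ ^ 2 * ‖A x‖ ^ (2 * q - 2)) μ := (j1.const_mul _).add (j0.const_mul _)
      rw [integral_add (j10.const_mul _) (j2.const_mul _),
        integral_const_mul, integral_add (j1.const_mul _) (j0.const_mul _), integral_const_mul,
        integral_const_mul, integral_const_mul, ← hI1, ← hI0, ← hI2] at hIle
      have h5 : 0 ≤ η ^ 2 * (4 * q ^ 2 * (2 * τ * I1 + τ ^ 2 * I0) + 2 * C * I2 * η) := by
        nlinarith
      exact nonneg_of_mul_nonneg_right h5 (by positivity)
    have hI2n : 0 ≤ I2 := integral_nonneg fun x => by positivity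
    by_contra hneg
    push Not at hneg
    set E := 4 * q ^ 2 * (2 * τ * I1 + τ ^ 2 * I0) with hE
    have hEn : E < 0 := mul_neg_of_pos_of_neg (by positivity) hneg
    set η := min (δ / 2) (-E / (2 * (2 * C * I2 + 1))) with hη
    have hden : 0 < 2 * (2 * C * I2 + 1) := by positivity
    have hη0 : 0 < η := lt_min (by positivity) (div_pos (by linarith) hden)
    have h1 := hstep η hη0 ((min_le_left _ _).trans_lt (by linarith))
    have h2 : η * (2 * (2 * C * I2 + 1)) ≤ -E := by
      rw [← le_div_iff₀ hden]; exact min_le_right _ _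
    nlinarith
  have hI0n : 0 ≤ I0 := integral_nonneg fun x => by positivity
  by_contra hne
  have hlin : ∀ σ : ℝ, 0 < σ → σ ≤ 1 → 2 * |I1| ≤ σ * I0 := by
    intro σ h1 h2
    have a1 := hmain σ (by rw [abs_of_pos h1]; exact h2)
    have a2 := hmain (-σ) (by rw [abs_neg, abs_of_pos h1]; exact h2)
    have b1 : 0 ≤ 2 * I1 + σ * I0 := nonneg_of_mul_nonneg_right (a := σ) (by linarith) h1
    have b2 : 0 ≤ -2 * I1 + σ * I0 := nonneg_of_mul_nonneg_right (a := σ) (by linarith) h1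
    rcases abs_cases I1 with ⟨h, _⟩ | ⟨h, _⟩ <;> rw [h] <;> linarith
  have hpos : 0 < |I1| := abs_pos.2 hne
  have h3 := hlin (min 1 (|I1| / (I0 + 1))) (by positivity) (min_le_left _ _)
  have h4 : min 1 (|I1| / (I0 + 1)) * (I0 + 1) ≤ |I1| := by
    rw [← le_div_iff₀ (by positivity)]; exact min_le_right _ _
  have h5 : 0 ≤ min 1 (|I1| / (I0 + 1)) := by positivity
  nlinarith

lemma torusChar_continuous {d : ℕ} (α : Fin d → ℤ) : Continuous (torusChar α) := by
  unfold torusChar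
  fun_prop

lemma torusChar_add {d : ℕ} (α β : Fin d → ℤ) (x : Torus d) :
    torusChar (α + β) x = torusChar α x * torusChar β x := by
  simp [torusChar, Finset.prod_mul_distrib]

lemma torusChar_norm {d : ℕ} (α : Fin d → ℤ) (x : Torus d) : ‖torusChar α x‖ = 1 := by
  unfold torusChar
  rw [norm_prod]
  refine Finset.prod_eq_one fun j _ => ?_
  rw [fourier_apply]
  exact Circle.norm_coe _

lemma torusChar_at_zero {d : ℕ} (α : Fin d → ℤ) : torusChar α 0 = 1 := by
  simp [torusChar]

lemma torusChar_neg {d : ℕ} (α : Fin d → ℤ) (x : Torus d) :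
    torusChar (-α) x = (starRingEnd ℂ) (torusChar α x) := by
  simp [torusChar]

lemma torusChar_shift {d : ℕ} {α : Fin d → ℤ} (hα : α ≠ 0) :
    ∃ x₀ : Torus d, ∀ x, torusChar α (x + x₀) = -torusChar α x := by
  obtain ⟨j, hj⟩ := Function.ne_iff.1 hα
  refine ⟨Pi.single j (((1 : ℝ) / 2 / (α j) : ℝ) : AddCircle (1 : ℝ)), fun x => ?_⟩
  unfold torusChar
  rw [← Finset.mul_prod_erase _ _ (Finset.mem_univ j),
    ← Finset.mul_prod_erase _ (fun i => fourier (α i) (x i)) (Finset.mem_univ j)]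
  rw [Pi.add_apply, Pi.single_eq_same, fourier_add_half_inv_index hj one_pos, neg_mul]
  congr 2
  refine Finset.prod_congr rfl fun i hi => ?_
  rw [Pi.add_apply, Pi.single_eq_of_ne (Finset.ne_of_mem_erase hi), add_zero]

lemma torus_integrable {d : ℕ} {E : Type*} [NormedAddCommGroup E] {f : Torus d → E}
    (hf : Continuous f) : Integrable f volume :=
  hf.integrable_of_hasCompactSupport (HasCompactSupport.of_compactSpace f)

lemma moment_ne_zero {d : ℕ} {α : Fin d → ℤ} (hα : α ≠ 0) (r : ℝ) (hr : r ≠ 0) :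
    ∫ x : Torus d, ‖1 + 1 / 2 * torusChar α x‖ ^ r * (torusChar α x).re ≠ 0 := by
  obtain ⟨x₀, hx₀⟩ := torusChar_shift hα
  have hc := torusChar_continuous α
  have hlow : ∀ w : ℂ, ‖w‖ = 1 → 0 < ‖1 + 1 / 2 * w‖ := by
    intro w hw
    have h1 := norm_sub_norm_le (1 : ℂ) (-(1 / 2 * w))
    rw [sub_neg_eq_add] at h1
    have h2 : ‖-(1 / 2 * w)‖ = 1 / 2 := by rw [norm_neg, norm_mul, hw]; norm_num
    rw [h2, norm_one] at h1
    linarith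
  have hcont : ∀ u : Torus d → ℂ, Continuous u → (∀ x, ‖u x‖ = 1) →
      Continuous fun x => ‖1 + 1 / 2 * u x‖ ^ r := fun u hu hn =>
    (by fun_prop : Continuous fun x => ‖1 + 1 / 2 * u x‖).rpow_const
      fun x => Or.inl (hlow _ (hn x)).ne'
  have c1 := hcont _ hc (torusChar_norm α)
  have c2 := hcont (fun x => -torusChar α x) hc.neg (fun x => by simp [torusChar_norm])
  set φ : ℂ → ℝ := fun w => ‖1 + 1 / 2 * w‖ ^ r * w.re with hφ
  have e1 : ∫ x : Torus d, φ (torusChar α x) = ∫ x : Torus d, φ (-torusChar α x) := by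
    rw [← integral_add_right_eq_self (fun x => φ (torusChar α x)) x₀]
    simp only [hx₀]
  intro h0
  have h0' : ∫ x : Torus d, φ (torusChar α x) = 0 := h0
  have i1 : Continuous fun x : Torus d => φ (torusChar α x) := by
    simp only [hφ]; fun_prop
  have i2 : Continuous fun x : Torus d => φ (-torusChar α x) := by
    simp only [hφ]; fun_prop
  have hsum : ∫ x : Torus d, (φ (torusChar α x) + φ (-torusChar α x)) = 0 := by
    rw [integral_add (torus_integrable i1) (torus_integrable i2), ← e1, h0', add_zero]
  have hsq : ∀ w : ℂ, ‖1 + 1 / 2 * w‖ ^ 2 - ‖1 + 1 / 2 * (-w)‖ ^ 2 = 2 * w.re := by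
    intro w
    rw [← Complex.normSq_eq_norm_sq, ← Complex.normSq_eq_norm_sq, Complex.normSq_apply,
      Complex.normSq_apply]
    simp
    ring
  -- the sign of the integrand
  have hle : ∀ w : ℂ, 0 ≤ w.re → ‖1 + 1 / 2 * (-w)‖ ≤ ‖1 + 1 / 2 * w‖ := fun w hw =>
    (le_abs_self _).trans (abs_le_of_sq_le_sq (by linarith [hsq w]) (norm_nonneg _))
  have hval : φ 1 + φ (-1) = (3 / 2) ^ r - (1 / 2) ^ r := by
    have h1 : ‖(1 : ℂ) + 1 / 2 * 1‖ = 3 / 2 := by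
      rw [show (1 : ℂ) + 1 / 2 * 1 = ((3 / 2 : ℝ) : ℂ) by push_cast; norm_num,
        Complex.norm_real]; norm_num
    have h2 : ‖(1 : ℂ) + 1 / 2 * (-1)‖ = 1 / 2 := by
      rw [show (1 : ℂ) + 1 / 2 * (-1) = ((1 / 2 : ℝ) : ℂ) by push_cast; norm_num,
        Complex.norm_real]; norm_num
    simp only [hφ]
    rw [h1, h2]; simp; ring
  have hform : ∀ w : ℂ, φ w + φ (-w)
      = (‖1 + 1 / 2 * w‖ ^ r - ‖1 + 1 / 2 * (-w)‖ ^ r) * w.re := by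
    intro w; simp only [hφ, Complex.neg_re]; ring
  have hpos : ∀ σ : ℝ, (∀ w : ℂ, ‖w‖ = 1 → 0 ≤ w.re → 0 ≤ σ * (φ w + φ (-w))) →
      0 < σ * (φ 1 + φ (-1)) → False := by
    intro σ h1 h2
    have h3 : ∀ x : Torus d, 0 ≤ σ * (φ (torusChar α x) + φ (-torusChar α x)) := by
      intro x
      rcases le_total 0 (torusChar α x).re with h | h
      · exact h1 _ (torusChar_norm α x) h
      · have := h1 (-torusChar α x) (by simp [torusChar_norm]) (by simpa using h)
        rw [neg_neg, add_comm] at this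
        exact this
    have hcc : Continuous fun x : Torus d => σ * (φ (torusChar α x) + φ (-torusChar α x)) :=
      continuous_const.mul (i1.add i2)
    have := hcc.integral_pos_of_hasCompactSupport_nonneg_nonzero (μ := volume)
      (HasCompactSupport.of_compactSpace _) h3 (x := 0)
      (by rw [torusChar_at_zero]; exact h2.ne')
    rw [integral_const_mul, hsum, mul_zero] at this
    exact lt_irrefl _ this
  rcases lt_or_gt_of_ne hr with hr | hr
  · refine hpos (-1) ?_ ?_
    · intro w hw hre
      rw [hform]
      have := Real.rpow_le_rpow_of_nonpos (hlow (-w) (by simpa using hw)) (hle w hre) hr.le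
      nlinarith
    · rw [hval]
      have := Real.rpow_lt_rpow_of_neg (x := 1 / 2) (y := 3 / 2) (by norm_num) (by norm_num) hr
      linarith
  · refine hpos 1 ?_ ?_
    · intro w hw hre
      rw [hform]
      have := Real.rpow_le_rpow (norm_nonneg _) (hle w hre) hr.le
      nlinarith
    · rw [hval]
      have := Real.rpow_lt_rpow (x := 1 / 2) (y := 3 / 2) (by norm_num) (by norm_num) hr
      linarith

lemma sup_bound (s t : ℂ) (hs : ‖s‖ = 1) (ht : ‖t‖ = 1) :
    ‖1 + 1 / 10 * t + 1 / 10 * s + (-(1 / 100)) * (s * t)‖ ≤ 119 / 100 := by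
  have h1 : s.re ^ 2 + s.im ^ 2 = 1 := by
    have h2 := Complex.normSq_eq_norm_sq s
    rw [hs, Complex.normSq_apply] at h2; nlinarith
  have h2 : t.re ^ 2 + t.im ^ 2 = 1 := by
    have h2 := Complex.normSq_eq_norm_sq t
    rw [ht, Complex.normSq_apply] at h2; nlinarith
  have e : ‖1 + 1 / 10 * t + 1 / 10 * s + (-(1 / 100)) * (s * t)‖ ^ 2
      = 1.0201 + 0.198 * (s.re + t.re) + 0.04 * (s.im * t.im) := by
    rw [← Complex.normSq_eq_norm_sq, Complex.normSq_apply]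
    simp
    generalize s.re = a at *
    generalize s.im = b at *
    generalize t.re = c at *
    generalize t.im = e at *
    norm_num
    linear_combination (1 / 100 - 2 / 1000 * c + 1 / 10000 * (c ^ 2 + e ^ 2)) * h1
      + (1 / 100 - 2 / 1000 * a + 1 / 10000) * h2
  refine (le_abs_self _).trans (abs_le_of_sq_le_sq ?_ (by norm_num))
  rw [e]
  have a1 : s.re ≤ 1 := by nlinarith
  have a2 : t.re ≤ 1 := by nlinarith
  nlinarith [sq_nonneg (s.im - t.im), sq_nonneg (1 - s.re), sq_nonneg (1 - t.re)]

lemma trigPoly_add {d : ℕ} (F : Finset (Fin d → ℤ)) (a b : (Fin d → ℤ) → ℂ) (x : Torus d) :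
    trigPoly F (a + b) x = trigPoly F a x + trigPoly F b x := by
  simp [trigPoly, add_mul, Finset.sum_add_distrib]

lemma trigPoly_single {d : ℕ} (F : Finset (Fin d → ℤ)) (α : Fin d → ℤ) (c : ℂ) (x : Torus d) :
    trigPoly F (Pi.single α c) x = if α ∈ F then c * torusChar α x else 0 := by
  unfold trigPoly
  split_ifs with h
  · rw [Finset.sum_eq_single α]
    · simp
    · intro β _ hβ; simp [Pi.single_eq_of_ne hβ]
    · intro h'; exact absurd h h'
  · refine Finset.sum_eq_zero fun β hβ => ?_
    have hne : β ≠ α := by rintro rfl; exact h hβ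
    rw [Pi.single_eq_of_ne hne, zero_mul]

/-- Consequence of contractivity for four frequencies. -/
lemma contractive_four {d : ℕ} {p : ℝ≥0∞} {Γ : Set (Fin d → ℤ)} (hN : Γ ⊆ NN d)
    (hΓ : IsContractiveHp d p Γ) {α β γ : Fin d → ℤ} (hα : α ∈ Γ) (hβ : β ∈ Γ) (hγ : γ ∈ Γ)
    (hl : α + γ - β ∈ NN d) (hl' : α + γ - β ∉ Γ) (a b t : ℂ) :
    eLpNorm (fun x : Torus d => 1 + b * torusChar (γ - β) x + a * torusChar (α - β) x) p volume ≤
    eLpNorm (fun x : Torus d => 1 + b * torusChar (γ - β) x + a * torusChar (α - β) x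
      + t * (torusChar (α - β) x * torusChar (γ - β) x)) p volume := by
  have h := hΓ {β, γ, α, α + γ - β} (by
    intro u hu
    simp only [Finset.coe_insert, Finset.coe_singleton, Set.mem_insert_iff,
      Set.mem_singleton_iff] at hu
    rcases hu with rfl | rfl | rfl | rfl
    · exact hN hβ
    · exact hN hγ
    · exact hN hα
    · exact hl) (Pi.single β 1 + Pi.single γ b + Pi.single α a + Pi.single (α + γ - β) t)
  have eγ : ∀ x : Torus d, torusChar γ x = torusChar β x * torusChar (γ - β) x := fun x => by
    rw [← torusChar_add]; congr 1; abel
  have eα : ∀ x : Torus d, torusChar α x = torusChar β x * torusChar (α - β) x := fun x => by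
    rw [← torusChar_add]; congr 1; abel
  have el : ∀ x : Torus d, torusChar (α + γ - β) x
      = torusChar β x * (torusChar (α - β) x * torusChar (γ - β) x) := fun x => by
    rw [← torusChar_add, ← torusChar_add]; congr 1; abel
  refine le_trans (le_of_eq ?_) (h.trans (le_of_eq ?_))
  · refine eLpNorm_congr_norm_ae (Filter.Eventually.of_forall fun x => ?_)
    simp only [trigPoly_add, trigPoly_single, Finset.mem_filter, Finset.mem_insert,
      Finset.mem_singleton, hα, hβ, hγ, hl', true_or, or_true, and_true, and_false, if_true,
      if_false, add_zero]
    rw [eγ, eα, ← one_mul ‖_ + _‖, ← torusChar_norm β x, ← norm_mul]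
    congr 1; ring
  · refine eLpNorm_congr_norm_ae (Filter.Eventually.of_forall fun x => ?_)
    simp only [trigPoly_add, trigPoly_single, Finset.mem_insert,
      Finset.mem_singleton, true_or, or_true, if_true]
    rw [eγ, eα, el, ← one_mul ‖1 + _ + _ + _‖, ← torusChar_norm β x, ← norm_mul]
    congr 1; ring

lemma integral_le_of_eLpNorm_le {d : ℕ} {p : ℝ≥0∞} (hp : 1 ≤ p) (hp' : p ≠ ∞) {f g : Torus d → ℂ}
    (hf : Continuous f) (hg : Continuous g)
    (h : eLpNorm f p volume ≤ eLpNorm g p volume) :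
    ∫ x, ‖f x‖ ^ p.toReal ≤ ∫ x, ‖g x‖ ^ p.toReal := by
  have hp0 : p ≠ 0 := (zero_lt_one.trans_le hp).ne'
  have hpos : 0 < p.toReal := ENNReal.toReal_pos hp0 hp'
  have mf : MemLp f p volume := hf.memLp_of_hasCompactSupport (HasCompactSupport.of_compactSpace f)
  have mg : MemLp g p volume := hg.memLp_of_hasCompactSupport (HasCompactSupport.of_compactSpace g)
  have n1 : 0 ≤ ∫ x, ‖f x‖ ^ p.toReal := integral_nonneg fun x => by positivity
  have n2 : 0 ≤ ∫ x, ‖g x‖ ^ p.toReal := integral_nonneg fun x => by positivity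
  rw [mf.eLpNorm_eq_integral_rpow_norm hp0 hp', mg.eLpNorm_eq_integral_rpow_norm hp0 hp',
    ENNReal.ofReal_le_ofReal_iff (by positivity),
    Real.rpow_le_rpow_iff n1 n2 (inv_pos.2 hpos)] at h
  exact h

lemma closedE_of_contractive {d : ℕ} {p : ℝ≥0∞} (hp : 1 ≤ p) (hp2 : p ≠ 2)
    {Γ : Set (Fin d → ℤ)} (hN : Γ ⊆ NN d) (hΓ : IsContractiveHp d p Γ) : ClosedE Γ := by
  intro α hα β hβ γ hγ hl
  by_contra hl'
  have H := contractive_four hN hΓ hα hβ hγ hl hl'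
  have c1 := torusChar_continuous (α - β)
  have c2 := torusChar_continuous (γ - β)
  by_cases hp' : p = ∞
  · subst hp'
    have h := H (1 / 10) (1 / 10) (-(1 / 100))
    have hb : eLpNorm (fun x : Torus d => 1 + 1 / 10 * torusChar (γ - β) x
      + 1 / 10 * torusChar (α - β) x
      + (-(1 / 100)) * (torusChar (α - β) x * torusChar (γ - β) x)) ∞ volume
        ≤ ENNReal.ofReal (119 / 100) := by
      rw [eLpNorm_exponent_top]
      exact eLpNormEssSup_le_of_ae_bound (Filter.Eventually.of_forall fun x =>
        sup_bound _ _ (torusChar_norm _ x) (torusChar_norm _ x))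
    have h2 := h.trans hb
    rw [eLpNorm_exponent_top] at h2
    set f : Torus d → ℂ := fun x => 1 + 1 / 10 * torusChar (γ - β) x
      + 1 / 10 * torusChar (α - β) x with hf
    have hcf : Continuous f := by fun_prop
    have h3 : ∀ᵐ x ∂(volume : Measure (Torus d)), ‖f x‖ ≤ 119 / 100 := by
      filter_upwards [ae_le_eLpNormEssSup (f := f) (μ := volume)] with x hx
      have := hx.trans h2
      rw [← ofReal_norm, ENNReal.ofReal_le_ofReal_iff (by norm_num)] at this
      exact this
    have ho : IsOpen {x | 119 / 100 < ‖f x‖} := isOpen_lt continuous_const hcf.norm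
    have hpos := ho.measure_pos volume ⟨0, by
      simp only [Set.mem_ofPred_eq, hf, torusChar_at_zero]
      rw [show (1 : ℂ) + 1 / 10 * 1 + 1 / 10 * 1 = ((12 / 10 : ℝ) : ℂ) by push_cast; norm_num,
        Complex.norm_real]
      norm_num⟩
    rw [ae_iff] at h3
    simp only [not_le] at h3
    exact hpos.ne' h3
  · have hne : γ - β ≠ 0 := by
      intro h0
      rw [sub_eq_zero] at h0
      rw [h0, add_sub_cancel_right] at hl'
      exact hl' hα
    have hp0 : p ≠ 0 := (zero_lt_one.trans_le hp).ne'
    have hpos : 0 < p.toReal := ENNReal.toReal_pos hp0 hp'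
    have hq : 2 * (p.toReal / 2) = p.toReal := by ring
    have h0 := moment_zero (volume : Measure (Torus d)) (p.toReal / 2) (by positivity)
      (torusChar (α - β)) (torusChar (γ - β)) c1 c2 (torusChar_norm _) (torusChar_norm _) (by
        intro a t
        rw [hq]
        exact integral_le_of_eLpNorm_le hp hp' (by fun_prop) (by fun_prop) (H a (1 / 2) t))
    refine moment_ne_zero hne (2 * (p.toReal / 2) - 2) ?_ h0
    rw [hq]
    intro h2
    apply hp2
    rw [← ENNReal.ofReal_toReal hp', show p.toReal = 2 by linarith]
    simp

lemma torusChar_integral {d : ℕ} {α : Fin d → ℤ} (hα : α ≠ 0) :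
    ∫ x : Torus d, torusChar α x = 0 := by
  obtain ⟨x₀, hx₀⟩ := torusChar_shift hα
  have h := integral_add_right_eq_self (μ := (volume : Measure (Torus d))) (torusChar α) x₀
  simp only [hx₀] at h
  rw [integral_neg] at h
  exact self_eq_neg.1 h.symm

/-- Parseval, up to the (positive) total mass. -/
lemma parseval {d : ℕ} (F : Finset (Fin d → ℤ)) (a : (Fin d → ℤ) → ℂ) :
    ∫ x : Torus d, ‖trigPoly F a x‖ ^ (2 : ℝ)
      = (∑ α ∈ F, ‖a α‖ ^ 2) * (volume : Measure (Torus d)).real Set.univ := by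
  have e : ∀ x : Torus d, (((‖trigPoly F a x‖ ^ (2 : ℝ) : ℝ)) : ℂ)
      = ∑ α ∈ F, ∑ β ∈ F, a α * (starRingEnd ℂ) (a β) * torusChar (α - β) x := by
    intro x
    rw [Real.rpow_two]
    push_cast
    rw [← Complex.mul_conj', trigPoly, map_sum, Finset.sum_mul_sum]
    refine Finset.sum_congr rfl fun α _ => Finset.sum_congr rfl fun β _ => ?_
    rw [sub_eq_add_neg, torusChar_add, torusChar_neg, map_mul]
    ring
  have hi : ∀ c : ℂ, ∀ α : Fin d → ℤ, Integrable (fun x : Torus d => c * torusChar α x) volume :=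
    fun c α => torus_integrable (continuous_const.mul (torusChar_continuous α))
  apply Complex.ofReal_injective
  rw [← integral_complex_ofReal]
  simp only [e]
  rw [integral_finsetSum _ fun α _ => integrable_finsetSum _ fun β _ => hi _ _]
  push_cast
  rw [Finset.sum_mul]
  refine Finset.sum_congr rfl fun α hα => ?_
  rw [integral_finsetSum _ fun β _ => hi _ _, Finset.sum_eq_single α]
  · rw [integral_const_mul, sub_self, Complex.mul_conj']
    congr 1
    have : ∀ x : Torus d, torusChar (0 : Fin d → ℤ) x = 1 := by intro x; simp [torusChar]
    simp [this]
  · intro β _ hβ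
    rw [integral_const_mul, torusChar_integral (sub_ne_zero.2 hβ.symm), mul_zero]
  · intro h; exact absurd hα h

lemma contractive_two {d : ℕ} (Γ : Set (Fin d → ℤ)) : IsContractiveHp d 2 Γ := by
  intro F _ a
  have hc : ∀ G : Finset (Fin d → ℤ), Continuous (trigPoly G a) := by
    intro G
    unfold trigPoly
    exact continuous_finsetSum _ fun α _ => continuous_const.mul (torusChar_continuous α)
  have hm : ∀ G : Finset (Fin d → ℤ), MemLp (trigPoly G a) 2 volume := fun G =>
    (hc G).memLp_of_hasCompactSupport (HasCompactSupport.of_compactSpace _)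
  rw [(hm _).eLpNorm_eq_integral_rpow_norm (by norm_num) (by norm_num),
    (hm _).eLpNorm_eq_integral_rpow_norm (by norm_num) (by norm_num)]
  refine ENNReal.ofReal_le_ofReal ?_
  refine Real.rpow_le_rpow (integral_nonneg fun x => by positivity) ?_ (by positivity)
  simp only [ENNReal.toReal_ofNat]
  rw [parseval, parseval]
  refine mul_le_mul_of_nonneg_right ?_ (by positivity)
  exact Finset.sum_le_sum_of_subset_of_nonneg (Finset.filter_subset _ _) fun _ _ _ => by positivity

lemma not_crp_two {d k : ℕ} (hk : 1 ≤ k) (hkd : k ≤ d) :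
    ¬ ContractiveRestrictionProperty d 2 k := by
  intro h
  let v : Fin k → (Fin d → ℤ) := fun j => Pi.single (Fin.castLE hkd j) 1
  have hlin : LinearIndependent ℤ v :=
    (Pi.linearIndependent_single_one (Fin d) ℤ).comp (Fin.castLE hkd) (Fin.castLE_injective hkd)
  set Γ : Set (Fin d → ℤ) := insert 0 (Set.range v) with hΓ
  have hmem : ∀ γ ∈ Γ, (∀ j, 0 ≤ γ j ∧ γ j ≤ 1) := by
    rintro γ (rfl | ⟨i, rfl⟩) j
    · simp
    · simp only [v, Pi.single_apply]; split_ifs <;> simp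
  obtain ⟨Λ, ⟨x, H, rfl⟩, hΛ⟩ := h Γ ⟨0, Set.mem_insert _ _⟩ (fun γ hγ j => (hmem γ hγ j).1) (by
    intro γ₀ hγ₀
    have hs : Submodule.span ℤ ((· - γ₀) '' Γ) = Submodule.span ℤ (Set.range v) := by
      apply le_antisymm
      · rw [Submodule.span_le]
        have hsub : ∀ γ ∈ Γ, γ ∈ Submodule.span ℤ (Set.range v) := by
          rintro γ (rfl | hγ)
          · exact zero_mem _
          · exact Submodule.subset_span hγ
        rintro _ ⟨γ, hγ, rfl⟩
        exact sub_mem (hsub γ hγ) (hsub γ₀ hγ₀)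
      · rw [Submodule.span_le]
        intro γ hγ
        have h1 : γ - γ₀ ∈ Submodule.span ℤ ((· - γ₀) '' Γ) :=
          Submodule.subset_span ⟨γ, Set.mem_insert_of_mem _ hγ, rfl⟩
        have h2 : 0 - γ₀ ∈ Submodule.span ℤ ((· - γ₀) '' Γ) :=
          Submodule.subset_span ⟨0, Set.mem_insert _ _, rfl⟩
        have h3 := sub_mem h1 h2
        have e : γ - γ₀ - (0 - γ₀) = γ := by abel
        rw [e] at h3
        exact h3
    rw [hs, finrank_span_eq_card hlin, Fintype.card_fin]) (contractive_two Γ)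
  have h0 : (0 : Fin d → ℤ) ∈ Γ := Set.mem_insert _ _
  have h1 : v ⟨0, hk⟩ ∈ Γ := Set.mem_insert_of_mem _ ⟨_, rfl⟩
  have h0' := h0
  have h1' := h1
  rw [hΛ] at h0' h1'
  obtain ⟨⟨u, hu, hu'⟩, _⟩ := h0'
  obtain ⟨⟨w, hw, hw'⟩, _⟩ := h1'
  have h2 : v ⟨0, hk⟩ + v ⟨0, hk⟩ ∈ Γ := by
    rw [hΛ]
    refine ⟨⟨w + w - u, H.sub_mem (H.add_mem hw hw) hu, ?_⟩, ?_⟩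
    · simp only at hu' hw' ⊢
      rw [← hw', ← sub_zero (x + w + (x + w)), ← hu']; abel
    · intro j
      have := (hmem _ h1 j).1
      simp only [Pi.add_apply]; linarith
  have := (hmem _ h2 (Fin.castLE hkd ⟨0, hk⟩)).2
  simp [v] at this

/-- Theorem 2 (a): if `d = 2` or `k = 1`, then `H^p(𝕋^d)` enjoys the contractive
restriction property of dimension `k` iff `p ≠ 2`. -/
theorem contractive_restriction_property_a (d k : ℕ) (hd : 1 ≤ d) (hk : 1 ≤ k)
    (hkd : k ≤ d) (h : d = 2 ∨ k = 1) (p : ℝ≥0∞) (hp : 1 ≤ p) :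
    ContractiveRestrictionProperty d p k ↔ p ≠ 2 := by
  constructor
  · rintro hcrp rfl
    exact not_crp_two hk hkd hcrp
  · intro hp2 Γ hne hN hdim hΓ
    have hE := closedE_of_contractive hp hp2 hN hΓ
    by_cases hk1 : k = 1
    · subst hk1
      exact hE.one hN hne hdim
    · have hd2 : d = 2 := h.resolve_right hk1
      subst hd2
      have hk2 : k = 2 := by omega
      subst hk2
      exact hE.two hN hne hdim

end
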